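/- Consider a well-posed infinite network Σ with nonempty closed sets A_i ⊆ ℝ^{n_i}, let A = X ∩ ∏_{i∈ℕ} A_i be nonempty, suppose the Lyapunov-type assumptions and the uniformity assumptions hold for some M ∈ ℕ, and assume in addition that f is K-bounded with respect to A. Then Σ is ISS with respect to A: there exist β of class KL and γ of class K such that |x(k,ξ,u)|_A ≤ max{β(|ξ|_A, k), γ(‖u‖_∞)} for all k ∈ ℕ₀, all ξ ∈ X and all admissible inputs u. -/

import Mathlib

noncomputable section

/-- Class `K` comparison functions on `[0,∞)`. -/
def ClassK (γ : ℝ → ℝ) : Prop :=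
  ContinuousOn γ (Set.Ici 0) ∧ StrictMonoOn γ (Set.Ici 0) ∧ γ 0 = 0

/-- Class `K∞` comparison functions: class `K` and unbounded. -/
def ClassKinf (γ : ℝ → ℝ) : Prop :=
  ClassK γ ∧ ∀ c : ℝ, ∃ s : ℝ, 0 ≤ s ∧ c < γ s

/-- Class `KL` comparison functions. -/
def ClassKL (β : ℝ → ℝ → ℝ) : Prop :=
  ContinuousOn (fun p : ℝ × ℝ => β p.1 p.2) (Set.Ici 0 ×ˢ Set.Ici 0) ∧
    (∀ t : ℝ, 0 ≤ t → ClassK fun r => β r t) ∧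
    (∀ r : ℝ, 0 < r → StrictAntiOn (β r) (Set.Ici 0) ∧
      Filter.Tendsto (fun t => β r t) Filter.atTop (nhds 0))

section Network

variable {E : ℕ → Type*} [∀ i, NormedAddCommGroup (E i)]
variable {P : ℕ → Type*} [∀ i, NormedAddCommGroup (P i)]

/-- Membership in `ℓ∞(ℕ,(n_i))`: a uniformly bounded sequence. -/
def Bdd {G : ℕ → Type*} [∀ i, NormedAddCommGroup (G i)] (x : ∀ i, G i) : Prop :=
  ∃ C : ℝ, ∀ i, ‖x i‖ ≤ C

/-- The sup norm `|x|_∞ = sup_i |x_i|`. -/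
def supNorm {G : ℕ → Type*} [∀ i, NormedAddCommGroup (G i)] (x : ∀ i, G i) : ℝ :=
  ⨆ i, ‖x i‖

/-- Admissible external input signals: uniformly bounded sequences in `U`. -/
def AdmInput {G : ℕ → Type*} [∀ i, NormedAddCommGroup (G i)] (u : ℕ → ∀ i, G i) : Prop :=
  ∃ C : ℝ, ∀ k i, ‖u k i‖ ≤ C

/-- `‖u‖_∞ = sup_k |u(k)|_∞`. -/
def inputNorm {G : ℕ → Type*} [∀ i, NormedAddCommGroup (G i)] (u : ℕ → ∀ i, G i) : ℝ :=
  ⨆ k, supNorm (u k)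

/-- The set `A = X ∩ ∏_i A_i`. -/
def setA (A : ∀ i, Set (E i)) : Set (∀ i, E i) :=
  {y | Bdd y ∧ ∀ i, y i ∈ A i}

/-- The distance `|x|_A = inf_{y ∈ A} |x − y|_∞` from `x` to a set `A ⊆ X`. -/
def distA (x : ∀ i, E i) (A : Set (∀ i, E i)) : ℝ :=
  sInf ((fun y => supNorm (x - y)) '' A)

variable (I : ℕ → Finset ℕ)

/-- The network map `f(x,u) = (f_i(x_i, x̄_i, u_i))_{i∈ℕ}`. -/
def netF (f : ∀ i, E i → ((j : I i) → E j.1) → P i → E i)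
    (x : ∀ i, E i) (u : ∀ i, P i) : ∀ i, E i :=
  fun i => f i (x i) (fun j => x j.1) (u i)

/-- Solution of the discrete-time system `x⁺ = F(x,u)` in the extended state space. -/
def traj (F : (∀ i, E i) → (∀ i, P i) → ∀ i, E i)
    (ξ : ∀ i, E i) (u : ℕ → ∀ i, P i) : ℕ → ∀ i, E i
  | 0 => ξ
  | k + 1 => F (traj F ξ u k) (u k)

/-!
The function `V ξ = ⨆ i, W i (ξ i)` is a finite-step Lyapunov function: since
`distA ξ (setA A) = ⨆ i, infDist (ξ i) (A i)`, the uniform bounds on the `W i` sandwich `V` between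
class `K` functions of the distance, and `M` steps of the system take `V ξ` to at most
`max (α (V ξ)) (γ ‖u‖)`. For a time `k = k % M + M * (k / M)`, `K`-boundedness controls the first
`k % M < M` steps by a fixed class `K` function of `max |ξ| ‖u‖`, and the remaining `k / M` blocks
apply the iterate `α^[k / M]`. As `α` has no positive fixed point, these iterates decrease to
zero, and a decreasing sequence of class `K` functions with limit zero lies below a class `KL`
function.
-/

open Filter Set Topology

namespace ClassK

variable {γ δ : ℝ → ℝ}

theorem strictMonoOn (hγ : ClassK γ) : StrictMonoOn γ (Ici 0) := hγ.2.1

theorem monotoneOn (hγ : ClassK γ) : MonotoneOn γ (Ici 0) := hγ.strictMonoOn.monotoneOn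

theorem continuousOn (hγ : ClassK γ) : ContinuousOn γ (Ici 0) := hγ.1

theorem map_zero (hγ : ClassK γ) : γ 0 = 0 := hγ.2.2

theorem mono (hγ : ClassK γ) {s t : ℝ} (hs : 0 ≤ s) (hst : s ≤ t) : γ s ≤ γ t :=
  hγ.monotoneOn hs (hs.trans hst) hst

theorem nonneg (hγ : ClassK γ) {s : ℝ} (hs : 0 ≤ s) : 0 ≤ γ s :=
  hγ.map_zero.symm.trans_le (hγ.mono le_rfl hs)

theorem map_max (hγ : ClassK γ) {s t : ℝ} (hs : 0 ≤ s) (ht : 0 ≤ t) :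
    γ (max s t) = max (γ s) (γ t) :=
  hγ.monotoneOn.map_max hs ht

theorem map_ciSup {ι : Type*} [Nonempty ι] (hγ : ClassK γ) {a : ι → ℝ} (ha : ∀ i, 0 ≤ a i)
    (hbdd : BddAbove (range a)) : γ (⨆ i, a i) = ⨆ i, γ (a i) := by
  have hsub : range a ⊆ Ici 0 := range_subset_iff.2 ha
  rw [iSup, (hγ.monotoneOn.mono hsub).map_csSup_of_continuousWithinAt
    ((hγ.continuousOn _ (Real.iSup_nonneg ha)).mono hsub) (range_nonempty a) hbdd,
    ← range_comp, iSup, Function.comp_def]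

theorem tendsto_nhds_zero (hγ : ClassK γ) {ι : Type*} {l : Filter ι} {a : ι → ℝ}
    (ha : ∀ i, 0 ≤ a i) (hlim : Tendsto a l (𝓝 0)) : Tendsto (fun i => γ (a i)) l (𝓝 0) := by
  have hcont : Tendsto γ (𝓝[Ici 0] 0) (𝓝 (γ 0)) := hγ.continuousOn 0 self_mem_Ici
  rw [hγ.map_zero] at hcont
  exact hcont.comp (tendsto_nhdsWithin_iff.2 ⟨hlim, .of_forall ha⟩)

protected theorem id : ClassK id :=
  ⟨continuousOn_id, strictMono_id.strictMonoOn _, rfl⟩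

theorem comp (hγ : ClassK γ) (hδ : ClassK δ) : ClassK (γ ∘ δ) := by
  have hmaps : MapsTo δ (Ici 0) (Ici 0) := fun _ => hδ.nonneg
  refine ⟨hγ.continuousOn.comp hδ.continuousOn hmaps,
    hγ.strictMonoOn.comp hδ.strictMonoOn hmaps, ?_⟩
  rw [Function.comp_apply, hδ.map_zero, hγ.map_zero]

theorem add (hγ : ClassK γ) (hδ : ClassK δ) : ClassK (γ + δ) := by
  refine ⟨hγ.continuousOn.add hδ.continuousOn, hγ.strictMonoOn.add hδ.strictMonoOn, ?_⟩
  rw [Pi.add_apply, hγ.map_zero, hδ.map_zero, add_zero]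

theorem iterate (hγ : ClassK γ) : ∀ n : ℕ, ClassK γ^[n]
  | 0 => ClassK.id
  | n + 1 => (hγ.iterate n).comp hγ

theorem monotone_iterate (hγ : ClassK γ) (hle : ∀ s, 0 ≤ s → s ≤ γ s) {s : ℝ} (hs : 0 ≤ s) :
    Monotone fun n => γ^[n] s :=
  monotone_nat_of_le_succ fun n => by
    rw [Function.iterate_succ_apply']
    exact hle _ ((hγ.iterate n).nonneg hs)

section Contraction

variable (hγ : ClassK γ) (hlt : ∀ s, 0 < s → γ s < s) {s : ℝ} (hs : 0 ≤ s)
include hγ hlt hs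

theorem apply_le_self : γ s ≤ s := by
  rcases hs.eq_or_lt with rfl | hpos
  · exact hγ.map_zero.le
  · exact (hlt s hpos).le

theorem antitone_iterate : Antitone fun n => γ^[n] s :=
  antitone_nat_of_succ_le fun n => by
    rw [Function.iterate_succ_apply']
    exact hγ.apply_le_self hlt ((hγ.iterate n).nonneg hs)

theorem tendsto_iterate_zero : Tendsto (fun n => γ^[n] s) atTop (𝓝 0) := by
  have hnonneg : ∀ n, 0 ≤ γ^[n] s := fun n => (hγ.iterate n).nonneg hs
  obtain ⟨l, hl⟩ : ∃ l, Tendsto (fun n => γ^[n] s) atTop (𝓝 l) :=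
    ⟨_, tendsto_atTop_ciInf (hγ.antitone_iterate hlt hs) ⟨0, forall_mem_range.2 hnonneg⟩⟩
  have hl0 : 0 ≤ l := ge_of_tendsto' hl hnonneg
  have himage : Tendsto (fun n => γ^[n + 1] s) atTop (𝓝 (γ l)) := by
    simp only [Function.iterate_succ_apply']
    exact (hγ.continuousOn l hl0).tendsto.comp
      (tendsto_nhdsWithin_iff.2 ⟨hl, .of_forall hnonneg⟩)
  have hfixed : γ l = l := tendsto_nhds_unique himage (hl.comp (tendsto_add_atTop_nat 1))
  obtain rfl : 0 = l := hl0.eq_or_lt.resolve_right fun hpos => (hlt l hpos).ne hfixed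
  exact hl

end Contraction

end ClassK

namespace ClassKinf

variable {ω : ℝ → ℝ}

theorem classK (hω : ClassKinf ω) : ClassK ω := hω.1

theorem surjOn (hω : ClassKinf ω) : SurjOn ω (Ici 0) (Ici 0) := by
  intro y hy
  obtain ⟨s, hs, hys⟩ := hω.2 y
  have hmem : y ∈ Icc (ω 0) (ω s) := ⟨hω.classK.map_zero.trans_le hy, hys.le⟩
  obtain ⟨x, hx, hxy⟩ :=
    intermediate_value_Icc hs (hω.classK.continuousOn.mono Icc_subset_Ici_self) hmem
  exact ⟨x, hx.1, hxy⟩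

theorem exists_classK_leftInvOn (hω : ClassKinf ω) :
    ∃ g, ClassK g ∧ LeftInvOn g ω (Ici 0) := by
  have hmaps : MapsTo ω (Ici 0) (Ici 0) := fun _ => hω.classK.nonneg
  have hmono : StrictMono (hmaps.restrict ω (Ici 0) (Ici 0)) := fun x y hxy =>
    hω.classK.strictMonoOn x.2 y.2 hxy
  let e : Ici (0 : ℝ) ≃o Ici (0 : ℝ) :=
    hmono.orderIsoOfSurjective _ ((MapsTo.restrict_surjective_iff hmaps).2 hω.surjOn)
  let g : ℝ → ℝ := IciExtend fun y => (e.symm y : ℝ)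
  have hinv : LeftInvOn g ω (Ici 0) := fun x hx => by
    rw [show ω x = e ⟨x, hx⟩ from rfl]
    simp only [g, IciExtend_coe, OrderIso.symm_apply_apply]
  refine ⟨g, ⟨?_, ?_, ?_⟩, hinv⟩
  · rw [continuousOn_iff_continuous_domRestrict]
    exact (continuous_subtype_val.comp e.symm.continuous).congr fun y =>
      (IciExtend_coe (fun y => (e.symm y : ℝ)) y).symm
  · exact StrictMono.strictMonoOn_IciExtend fun _ _ hxy => e.symm.strictMono hxy
  · simpa only [hω.classK.map_zero] using hinv (self_mem_Ici (a := (0 : ℝ)))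

end ClassKinf

/-- A continuous interpolation from above of a nonnegative decreasing sequence `a`, which turns a
decay estimate along `ℕ` into one in real time. The cutoff in the `n`-th term is `1` for `t ≤ n`
and `0` for `n + 1 ≤ t`. -/
def antitoneEnvelope (a : ℕ → ℝ) (t : ℝ) : ℝ :=
  ⨆ n : ℕ, a n * Real.smoothTransition (n + 1 - t)

section AntitoneEnvelope

open Real (smoothTransition)

theorem antitoneEnvelope_zero (t : ℝ) : antitoneEnvelope 0 t = 0 := by
  simp [antitoneEnvelope]

variable {a b : ℕ → ℝ}

theorem antitoneEnvelope_nonneg (ha0 : ∀ n, 0 ≤ a n) (t : ℝ) : 0 ≤ antitoneEnvelope a t :=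
  Real.iSup_nonneg fun n => mul_nonneg (ha0 n) (smoothTransition.nonneg _)

section

variable (ha : Antitone a) (ha0 : ∀ n, 0 ≤ a n)
include ha ha0

theorem bddAbove_range_mul_smoothTransition (t : ℝ) :
    BddAbove (range fun n : ℕ => a n * smoothTransition (n + 1 - t)) :=
  ⟨a 0, forall_mem_range.2 fun n =>
    (mul_le_of_le_one_right (ha0 n) (smoothTransition.le_one _)).trans (ha n.zero_le)⟩

theorem le_antitoneEnvelope (n : ℕ) : a n ≤ antitoneEnvelope a n := by
  refine le_trans ?_ (le_ciSup (bddAbove_range_mul_smoothTransition ha ha0 n) n)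
  rw [smoothTransition.one_of_one_le (by linarith), mul_one]

theorem antitoneEnvelope_le {m : ℕ} {t : ℝ} (hm : m ≤ t) : antitoneEnvelope a t ≤ a m := by
  refine ciSup_le fun n => ?_
  rcases lt_or_ge n m with hnm | hmn
  · have hn : (n : ℝ) + 1 ≤ m := by exact_mod_cast hnm
    rw [smoothTransition.zero_of_nonpos (by linarith), mul_zero]
    exact ha0 m
  · exact (mul_le_of_le_one_right (ha0 n) (smoothTransition.le_one _)).trans (ha hmn)

theorem antitone_antitoneEnvelope : Antitone (antitoneEnvelope a) := fun t t' htt' =>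
  ciSup_mono (bddAbove_range_mul_smoothTransition ha ha0 t) fun n =>
    mul_le_mul_of_nonneg_left (smoothTransition.monotone (by linarith)) (ha0 n)

theorem antitoneEnvelope_eq_sup' {t : ℝ} {N : ℕ} (ht : t ≤ N) :
    antitoneEnvelope a t = (Finset.range (N + 1)).sup' Finset.nonempty_range_add_one
      fun n => a n * smoothTransition (n + 1 - t) := by
  refine le_antisymm (ciSup_le fun n => ?_) (Finset.sup'_le _ _ fun n _ =>
    le_ciSup (bddAbove_range_mul_smoothTransition ha ha0 t) n)
  rcases le_total n N with hnN | hNn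
  · exact Finset.le_sup' (fun n : ℕ => a n * smoothTransition (n + 1 - t))
      (Finset.mem_range_succ_iff.2 hnN)
  · calc a n * smoothTransition (n + 1 - t)
        ≤ a N := (mul_le_of_le_one_right (ha0 n) (smoothTransition.le_one _)).trans (ha hNn)
      _ = a N * smoothTransition (N + 1 - t) := by
        rw [smoothTransition.one_of_one_le (by linarith), mul_one]
      _ ≤ _ := Finset.le_sup' (fun n : ℕ => a n * smoothTransition (n + 1 - t))
        (Finset.self_mem_range_succ N)

theorem tendsto_antitoneEnvelope_zero (hlim : Tendsto a atTop (𝓝 0)) :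
    Tendsto (antitoneEnvelope a) atTop (𝓝 0) := by
  refine squeeze_zero' (.of_forall (antitoneEnvelope_nonneg ha0)) ?_
    (hlim.comp (tendsto_nat_floor_atTop (α := ℝ)))
  filter_upwards [eventually_ge_atTop 0] with t ht
  exact antitoneEnvelope_le ha ha0 (Nat.floor_le ht)

end

theorem antitoneEnvelope_mono (hab : a ≤ b) (hb : Antitone b) (hb0 : ∀ n, 0 ≤ b n) (t : ℝ) :
    antitoneEnvelope a t ≤ antitoneEnvelope b t :=
  ciSup_mono (bddAbove_range_mul_smoothTransition hb hb0 t) fun n =>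
    mul_le_mul_of_nonneg_right (hab n) (smoothTransition.nonneg _)

theorem continuousOn_antitoneEnvelope {X : Type*} [TopologicalSpace X] {a : ℕ → X → ℝ} {S : Set X}
    (hcont : ∀ n, ContinuousOn (a n) S) (ha : ∀ x ∈ S, Antitone fun n => a n x)
    (ha0 : ∀ x ∈ S, ∀ n, 0 ≤ a n x) :
    ContinuousOn (fun p : X × ℝ => antitoneEnvelope (fun n => a n p.1) p.2) (S ×ˢ univ) := by
  rintro ⟨x, t⟩ ⟨hx, -⟩
  obtain ⟨N, hN⟩ := exists_nat_gt t
  have hfinite : ContinuousOn (fun p : X × ℝ => (Finset.range (N + 1)).sup'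
      Finset.nonempty_range_add_one fun n => a n p.1 * smoothTransition (n + 1 - p.2))
      (S ×ˢ univ) :=
    ContinuousOn.finset_sup'_apply _ fun n _ =>
      ((hcont n).comp continuousOn_fst fun _ hp => hp.1).mul
        (smoothTransition.continuous.comp (by fun_prop)).continuousOn
  refine (hfinite (x, t) ⟨hx, trivial⟩).congr_of_eventuallyEq ?_
    (antitoneEnvelope_eq_sup' (ha x hx) (ha0 x hx) hN.le)
  have hlt : ∀ᶠ p : X × ℝ in 𝓝[S ×ˢ univ] (x, t), p.2 < N :=
    (continuous_snd.continuousWithinAt (x := (x, t))).eventually (gt_mem_nhds hN)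
  filter_upwards [hlt, self_mem_nhdsWithin] with p hp hpS
  exact antitoneEnvelope_eq_sup' (ha p.1 hpS.1) (ha0 p.1 hpS.1) hp.le

end AntitoneEnvelope

theorem classKL_add_mul_exp_neg {b : ℝ → ℝ → ℝ}
    (hcont : ContinuousOn (fun p : ℝ × ℝ => b p.1 p.2) (Ici 0 ×ˢ Ici 0))
    (hmono : ∀ t, 0 ≤ t → MonotoneOn (fun r => b r t) (Ici 0)) (hzero : ∀ t, 0 ≤ t → b 0 t = 0)
    (hanti : ∀ r, 0 < r → AntitoneOn (b r) (Ici 0))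
    (hlim : ∀ r, 0 < r → Tendsto (b r) atTop (𝓝 0)) :
    ClassKL fun r t => b r t + r * Real.exp (-t) := by
  have hcont' : ContinuousOn (fun p : ℝ × ℝ => b p.1 p.2 + p.1 * Real.exp (-p.2))
      (Ici 0 ×ˢ Ici 0) :=
    hcont.add (Continuous.continuousOn (by fun_prop))
  refine ⟨hcont', fun t ht => ⟨?_, ?_, ?_⟩, fun r hr => ⟨?_, ?_⟩⟩
  · exact hcont'.comp (f := fun r : ℝ => (r, t)) (Continuous.continuousOn (by fun_prop))
      fun r hr => ⟨hr, ht⟩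
  · exact (hmono t ht).add_strictMono fun r _ r' _ hrr' =>
      mul_lt_mul_of_pos_right hrr' (Real.exp_pos _)
  · simp only [hzero t ht, zero_mul, add_zero]
  · exact (hanti r hr).add_strictAnti fun t _ t' _ htt' =>
      mul_lt_mul_of_pos_left (Real.exp_lt_exp.2 (neg_lt_neg htt')) hr
  · simpa only [mul_zero, add_zero] using
      (hlim r hr).add (Real.tendsto_exp_neg_atTop_nhds_zero.const_mul r)

theorem exists_classKL_ge {a : ℕ → ℝ → ℝ} (haK : ∀ n, ClassK (a n))
    (hanti : ∀ s, 0 ≤ s → Antitone fun n => a n s)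
    (hlim : ∀ s, 0 ≤ s → Tendsto (fun n => a n s) atTop (𝓝 0)) :
    ∃ β, ClassKL β ∧ ∀ s, 0 ≤ s → ∀ n : ℕ, a n s ≤ β s n := by
  have hnonneg : ∀ s, 0 ≤ s → ∀ n, 0 ≤ a n s := fun s hs n => (haK n).nonneg hs
  refine ⟨fun s t => antitoneEnvelope (fun n => a n s) t + s * Real.exp (-t),
    classKL_add_mul_exp_neg ?_ ?_ ?_ ?_ ?_, fun s hs n => ?_⟩
  · exact (continuousOn_antitoneEnvelope (fun n => (haK n).continuousOn) hanti hnonneg).mono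
      (prod_mono_right (subset_univ _))
  · exact fun t _ r hr r' hr' hrr' =>
      antitoneEnvelope_mono (fun n => (haK n).mono hr hrr') (hanti r' hr') (hnonneg r' hr') t
  · intro t _
    simp only [(haK _).map_zero]
    exact antitoneEnvelope_zero t
  · exact fun r hr => (antitone_antitoneEnvelope (hanti r hr.le) (hnonneg r hr.le)).antitoneOn _
  · exact fun r hr => tendsto_antitoneEnvelope_zero (hanti r hr.le) (hnonneg r hr.le)
      (hlim r hr.le)
  · exact (le_antitoneEnvelope (hanti s hs) (hnonneg s hs) n).trans
      (le_add_of_nonneg_right (mul_nonneg hs (Real.exp_pos _).le))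

theorem exists_classKL_ge_iterate_div {g α h : ℝ → ℝ} (hg : ClassK g) (hα : ClassK α)
    (hαlt : ∀ s, 0 < s → α s < s) (hh : ClassK h) {M : ℕ} (hM : 0 < M) :
    ∃ β, ClassKL β ∧ ∀ s, 0 ≤ s → ∀ k : ℕ, g (α^[k / M] (h s)) ≤ β s k := by
  have hnonneg : ∀ s, 0 ≤ s → ∀ n, 0 ≤ α^[n] (h s) := fun s hs n =>
    (hα.iterate n).nonneg (hh.nonneg hs)
  refine exists_classKL_ge (a := fun k => g ∘ α^[k / M] ∘ h)
    (fun k => hg.comp ((hα.iterate _).comp hh)) (fun s hs k l hkl => ?_) (fun s hs => ?_)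
  · exact hg.mono (hnonneg s hs _)
      (hα.antitone_iterate hαlt (hh.nonneg hs) (Nat.div_le_div_right hkl))
  · exact hg.tendsto_nhds_zero (fun k => hnonneg s hs _)
      ((hα.tendsto_iterate_zero hαlt (hh.nonneg hs)).comp (Nat.tendsto_div_const_atTop hM.ne'))

section ScalarEstimates

variable {D V : ℕ → ℝ} {t : ℝ} {M : ℕ}

theorem le_iterate_max_of_succ_le {κ : ℝ → ℝ} (hκ : ClassK κ) (hκle : ∀ s, 0 ≤ s → s ≤ κ s)
    (ht : 0 ≤ t) (hstep : ∀ k, D (k + 1) ≤ κ (max (D k) t)) (k : ℕ) :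
    D k ≤ κ^[k] (max (D 0) t) := by
  suffices hmax : max (D k) t ≤ κ^[k] (max (D 0) t) from (le_max_left _ _).trans hmax
  induction k with
  | zero => rfl
  | succ k ih =>
    have hm : 0 ≤ max (D k) t := le_max_of_le_right ht
    calc max (D (k + 1)) t
        ≤ κ (max (D k) t) := max_le (hstep k) ((le_max_right _ _).trans (hκle _ hm))
      _ ≤ κ (κ^[k] (max (D 0) t)) := hκ.mono hm ih
      _ = κ^[k + 1] (max (D 0) t) := (Function.iterate_succ_apply' _ _ _).symm

theorem le_max_iterate_of_add_le {α : ℝ → ℝ} (hα : ClassK α) (hαlt : ∀ s, 0 < s → α s < s)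
    {c : ℝ} (hc : 0 ≤ c) (hV : ∀ k, 0 ≤ V k) (hstep : ∀ k, V (k + M) ≤ max (α (V k)) c)
    (r m : ℕ) : V (r + M * m) ≤ max (α^[m] (V r)) c := by
  induction m with
  | zero => exact le_max_left _ _
  | succ m ih =>
    have hiter : 0 ≤ α^[m] (V r) := (hα.iterate m).nonneg (hV r)
    calc V (r + M * (m + 1))
        = V (r + M * m + M) := by rw [Nat.mul_succ, Nat.add_assoc]
      _ ≤ max (α (V (r + M * m))) c := hstep (r + M * m)
      _ ≤ max (max (α (α^[m] (V r))) (α c)) c :=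
          max_le_max_right c ((hα.mono (hV _) ih).trans_eq (hα.map_max hiter hc))
      _ = max (α^[m + 1] (V r)) c := by
          rw [max_assoc, max_eq_right (hα.apply_le_self hαlt hc), Function.iterate_succ_apply']

theorem le_max_of_bounded_growth_of_finite_step_decay {κ ω g α γ : ℝ → ℝ}
    (hκ : ClassK κ) (hκle : ∀ s, 0 ≤ s → s ≤ κ s) (hω : ClassK ω) (hg : ClassK g) (hα : ClassK α)
    (hαlt : ∀ s, 0 < s → α s < s) (hγ : ClassK γ) (hM : 0 < M) (ht : 0 ≤ t)
    (hD : ∀ k, 0 ≤ D k) (hV : ∀ k, 0 ≤ V k) (hDstep : ∀ k, D (k + 1) ≤ κ (max (D k) t))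
    (hDV : ∀ k, D k ≤ g (V k)) (hVD : ∀ k, V k ≤ ω (D k))
    (hVstep : ∀ k, V (k + M) ≤ max (α (V k)) (γ t)) (k : ℕ) :
    D k ≤ max (g (α^[k / M] (ω (κ^[M] (D 0))))) (g (ω (κ^[M] t) + γ t)) := by
  have hωκ : ClassK (ω ∘ κ^[M]) := hω.comp (hκ.iterate M)
  set v : ℝ := ω (κ^[M] (D 0))
  set w : ℝ := ω (κ^[M] t)
  have hv : 0 ≤ v := hωκ.nonneg (hD 0)
  have hw : 0 ≤ w := hωκ.nonneg ht
  have hαM : ClassK α^[k / M] := hα.iterate _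
  have hfirst : V (k % M) ≤ max v w := by
    have hgrowth : D (k % M) ≤ κ^[M] (max (D 0) t) :=
      (le_iterate_max_of_succ_le hκ hκle ht hDstep _).trans
        (hκ.monotone_iterate hκle (le_max_of_le_right ht) (Nat.mod_lt k hM).le)
    exact ((hVD _).trans (hω.mono (hD _) hgrowth)).trans_eq (hωκ.map_max (hD 0) ht)
  have hVk : V k ≤ max (α^[k / M] v) (w + γ t) := by
    calc V k
        = V (k % M + M * (k / M)) := by rw [Nat.mod_add_div]
      _ ≤ max (α^[k / M] (V (k % M))) (γ t) :=
          le_max_iterate_of_add_le hα hαlt (hγ.nonneg ht) hV hVstep _ _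
      _ ≤ max (max (α^[k / M] v) (α^[k / M] w)) (γ t) :=
          max_le_max_right _ ((hαM.mono (hV _) hfirst).trans_eq (hαM.map_max hv hw))
      _ ≤ max (α^[k / M] v) (w + γ t) := by
          have hαw : α^[k / M] w ≤ w := hα.antitone_iterate hαlt hw (Nat.zero_le _)
          rw [max_assoc]
          exact max_le_max_left _ (max_le (hαw.trans (le_add_of_nonneg_right (hγ.nonneg ht)))
            (le_add_of_nonneg_left hw))
  calc D k ≤ g (V k) := hDV k
    _ ≤ g (max (α^[k / M] v) (w + γ t)) := hg.mono (hV k) hVk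
    _ = max (g (α^[k / M] v)) (g (w + γ t)) :=
        hg.map_max (hαM.nonneg hv) (add_nonneg hw (hγ.nonneg ht))

end ScalarEstimates

section Norms

variable {G : ℕ → Type*} [∀ i, NormedAddCommGroup (G i)]

theorem supNorm_nonneg (x : ∀ i, G i) : 0 ≤ supNorm x :=
  Real.iSup_nonneg fun _ => norm_nonneg _

theorem inputNorm_nonneg (u : ℕ → ∀ i, G i) : 0 ≤ inputNorm u :=
  Real.iSup_nonneg fun _ => supNorm_nonneg _

theorem Bdd.bddAbove {x : ∀ i, G i} (hx : Bdd x) : BddAbove (range fun i => ‖x i‖) :=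
  hx.imp fun _ hC => forall_mem_range.2 hC

theorem Bdd.sub {x y : ∀ i, G i} (hx : Bdd x) (hy : Bdd y) : Bdd (x - y) := by
  obtain ⟨C, hC⟩ := hx
  obtain ⟨D, hD⟩ := hy
  exact ⟨C + D, fun i => (norm_sub_le _ _).trans (add_le_add (hC i) (hD i))⟩

namespace AdmInput

variable {u : ℕ → ∀ i, G i}

theorem bdd (hu : AdmInput u) (k : ℕ) : Bdd (u k) := hu.imp fun _ hC => hC k

theorem shift (hu : AdmInput u) (k : ℕ) : AdmInput fun n => u (k + n) :=
  hu.imp fun _ hC n => hC (k + n)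

theorem supNorm_le_inputNorm (hu : AdmInput u) (k : ℕ) : supNorm (u k) ≤ inputNorm u := by
  obtain ⟨C, hC⟩ := hu
  exact le_ciSup (f := fun k => supNorm (u k)) ⟨C, forall_mem_range.2 fun j => ciSup_le (hC j)⟩ k

theorem inputNorm_shift_le (hu : AdmInput u) (k : ℕ) :
    inputNorm (fun n => u (k + n)) ≤ inputNorm u :=
  ciSup_le fun n => hu.supNorm_le_inputNorm (k + n)

end AdmInput

end Norms

section Distance

theorem distA_nonneg (x : ∀ i, E i) (S : Set (∀ i, E i)) : 0 ≤ distA x S :=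
  Real.sInf_nonneg (forall_mem_image.2 fun _ _ => supNorm_nonneg _)

theorem distA_le_supNorm_sub (x : ∀ i, E i) {S : Set (∀ i, E i)} {y : ∀ i, E i} (hy : y ∈ S) :
    distA x S ≤ supNorm (x - y) :=
  csInf_le ⟨0, forall_mem_image.2 fun _ _ => supNorm_nonneg _⟩ (mem_image_of_mem _ hy)

variable {x : ∀ i, E i} {A : ∀ i, Set (E i)}

theorem infDist_le_distA_setA (hx : Bdd x) (hA : (setA A).Nonempty) (i : ℕ) :
    Metric.infDist (x i) (A i) ≤ distA x (setA A) := by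
  refine le_csInf (hA.image _) (forall_mem_image.2 fun y hy => ?_)
  calc Metric.infDist (x i) (A i)
      ≤ dist (x i) (y i) := Metric.infDist_le_dist_of_mem (hy.2 i)
    _ = ‖(x - y) i‖ := dist_eq_norm _ _
    _ ≤ supNorm (x - y) := le_ciSup (hx.sub hy.1).bddAbove i

theorem distA_setA_le (hx : Bdd x) (hA : ∀ i, (A i).Nonempty) {c : ℝ}
    (hc : ∀ i, Metric.infDist (x i) (A i) ≤ c) : distA x (setA A) ≤ c := by
  refine le_of_forall_pos_le_add fun ε hε => ?_
  have hnear : ∀ i, ∃ y ∈ A i, dist (x i) y < c + ε := fun i =>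
    (Metric.infDist_lt_iff (hA i)).1 ((hc i).trans_lt (lt_add_of_pos_right c hε))
  choose y hyA hy using hnear
  have hxy : ∀ i, ‖(x - y) i‖ ≤ c + ε := fun i => (dist_eq_norm (x i) (y i)).symm.trans_le (hy i).le
  have hxyBdd : Bdd (x - y) := ⟨c + ε, hxy⟩
  have hyBdd : Bdd y := sub_sub_cancel x y ▸ hx.sub hxyBdd
  have hyMem : y ∈ setA A := ⟨hyBdd, hyA⟩
  exact (distA_le_supNorm_sub x hyMem).trans (ciSup_le hxy)

theorem bddAbove_range_infDist (hx : Bdd x) (hA : (setA A).Nonempty) :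
    BddAbove (range fun i => Metric.infDist (x i) (A i)) :=
  ⟨_, forall_mem_range.2 (infDist_le_distA_setA hx hA)⟩

theorem distA_setA_eq_iSup_infDist (hx : Bdd x) (hA : (setA A).Nonempty) :
    distA x (setA A) = ⨆ i, Metric.infDist (x i) (A i) :=
  le_antisymm
    (distA_setA_le hx (fun i => ⟨_, hA.some_mem.2 i⟩)
      (le_ciSup (bddAbove_range_infDist hx hA)))
    (ciSup_le (infDist_le_distA_setA hx hA))

end Distance

section Stability

variable {F : (∀ i, E i) → (∀ i, P i) → ∀ i, E i} {S : Set (∀ i, E i)} {M : ℕ}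

/-- Well-posedness of `x⁺ = F(x,u)`: `F` maps `X × U` into `X`. -/
def IsWellPosed (F : (∀ i, E i) → (∀ i, P i) → ∀ i, E i) : Prop :=
  ∀ x u, Bdd x → Bdd u → Bdd (F x u)

/-- `K`-boundedness of `F` with respect to `S`, which bounds the growth of the distance to `S` in a
single step. -/
def IsKBounded (F : (∀ i, E i) → (∀ i, P i) → ∀ i, E i) (S : Set (∀ i, E i)) : Prop :=
  ∃ κ₁ κ₂ : ℝ → ℝ, ClassK κ₁ ∧ ClassK κ₂ ∧
    ∀ ξ μ, Bdd ξ → Bdd μ → distA (F ξ μ) S ≤ κ₁ (distA ξ S) + κ₂ (supNorm μ)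

/-- Input-to-state stability of `x⁺ = F(x,u)` with respect to `S`, with transient and gain combined
by a maximum. -/
def IsISS (F : (∀ i, E i) → (∀ i, P i) → ∀ i, E i) (S : Set (∀ i, E i)) : Prop :=
  ∃ β γ, ClassKL β ∧ ClassK γ ∧ ∀ ξ, Bdd ξ → ∀ u, AdmInput u →
    ∀ k : ℕ, distA (traj F ξ u k) S ≤ max (β (distA ξ S) k) (γ (inputNorm u))

/-- `V` is an ISS Lyapunov function for `x⁺ = F(x,u)` with respect to `S` which is required to
decay only every `M` steps; it reduces stability of the network to a scalar estimate. The decay is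
in the maximum form: `α < id` away from zero, and the input enters through `max`. -/
def IsFiniteStepLyapunov (F : (∀ i, E i) → (∀ i, P i) → ∀ i, E i) (S : Set (∀ i, E i)) (M : ℕ)
    (V : (∀ i, E i) → ℝ) : Prop :=
  ∃ ωl ωu α γ : ℝ → ℝ, ClassKinf ωl ∧ ClassK ωu ∧ ClassK α ∧ (∀ s, 0 < s → α s < s) ∧ ClassK γ ∧
    (∀ ξ, Bdd ξ → ωl (distA ξ S) ≤ V ξ ∧ V ξ ≤ ωu (distA ξ S)) ∧
    ∀ ξ, Bdd ξ → ∀ u, AdmInput u → V (traj F ξ u M) ≤ max (α (V ξ)) (γ (inputNorm u))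

theorem traj_add {X U : ℕ → Type*} (F : (∀ i, X i) → (∀ i, U i) → ∀ i, X i) (ξ : ∀ i, X i)
    (u : ℕ → ∀ i, U i) (k j : ℕ) :
    traj F ξ u (k + j) = traj F (traj F ξ u k) (fun n => u (k + n)) j := by
  induction j with
  | zero => rfl
  | succ j ih => exact congrArg (F · (u (k + j))) ih

theorem IsWellPosed.bdd_traj (hF : IsWellPosed F) {ξ : ∀ i, E i} (hξ : Bdd ξ)
    {u : ℕ → ∀ i, P i} (hu : AdmInput u) : ∀ k, Bdd (traj F ξ u k)
  | 0 => hξ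
  | k + 1 => hF _ _ (hF.bdd_traj hξ hu k) (hu.bdd k)

theorem IsKBounded.exists_distA_le_max (hK : IsKBounded F S) :
    ∃ κ, ClassK κ ∧ (∀ s, 0 ≤ s → s ≤ κ s) ∧
      ∀ ξ μ, Bdd ξ → Bdd μ → distA (F ξ μ) S ≤ κ (max (distA ξ S) (supNorm μ)) := by
  obtain ⟨κ₁, κ₂, hκ₁, hκ₂, hK⟩ := hK
  have hsum : ClassK (κ₁ + κ₂) := hκ₁.add hκ₂
  refine ⟨id + (κ₁ + κ₂), ClassK.id.add hsum,
    fun s hs => le_add_of_nonneg_right (hsum.nonneg hs), fun ξ μ hξ hμ => ?_⟩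
  set m : ℝ := max (distA ξ S) (supNorm μ)
  have hm : 0 ≤ m := le_max_of_le_right (supNorm_nonneg μ)
  calc distA (F ξ μ) S
      ≤ κ₁ (distA ξ S) + κ₂ (supNorm μ) := hK ξ μ hξ hμ
    _ ≤ κ₁ m + κ₂ m := add_le_add (hκ₁.mono (distA_nonneg _ _) (le_max_left _ _))
        (hκ₂.mono (supNorm_nonneg _) (le_max_right _ _))
    _ ≤ m + (κ₁ m + κ₂ m) := le_add_of_nonneg_left hm

theorem IsFiniteStepLyapunov.isISS {V : (∀ i, E i) → ℝ} (hV : IsFiniteStepLyapunov F S M V)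
    (hM : 0 < M) (hF : IsWellPosed F) (hK : IsKBounded F S) : IsISS F S := by
  obtain ⟨ωl, ω, α, γ, hωl, hω, hα, hαlt, hγ, hsandwich, hdecay⟩ := hV
  obtain ⟨κ, hκ, hκle, hgrowth⟩ := hK.exists_distA_le_max
  obtain ⟨g, hg, hginv⟩ := hωl.exists_classK_leftInvOn
  have hωκ : ClassK (ω ∘ κ^[M]) := hω.comp (hκ.iterate M)
  obtain ⟨β, hβ, hle⟩ := exists_classKL_ge_iterate_div hg hα hαlt hωκ hM
  refine ⟨β, g ∘ (ω ∘ κ^[M] + γ), hβ, hg.comp (hωκ.add hγ), fun ξ hξ u hu k => ?_⟩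
  have hx : ∀ k, Bdd (traj F ξ u k) := hF.bdd_traj hξ hu
  have hD : ∀ k, 0 ≤ distA (traj F ξ u k) S := fun k => distA_nonneg _ _
  refine (le_max_of_bounded_growth_of_finite_step_decay (D := fun k => distA (traj F ξ u k) S)
    (V := fun k => V (traj F ξ u k)) hκ hκle hω hg hα hαlt hγ hM (inputNorm_nonneg u) hD
    (fun k => ?_) (fun k => ?_) (fun k => ?_) (fun k => (hsandwich _ (hx k)).2)
    (fun k => ?_) k).trans (max_le_max_right _ (hle _ (hD 0) k))
  · exact (hωl.classK.nonneg (hD k)).trans (hsandwich _ (hx k)).1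
  · exact (hgrowth _ _ (hx k) (hu.bdd k)).trans
      (hκ.mono (le_max_of_le_left (hD k)) (max_le_max_left _ (hu.supNorm_le_inputNorm k)))
  · exact (hginv (hD k)).symm.trans_le
      (hg.mono (hωl.classK.nonneg (hD k)) (hsandwich _ (hx k)).1)
  · rw [traj_add]
    exact (hdecay _ (hx k) _ (hu.shift k)).trans
      (max_le_max_left _ (hγ.mono (inputNorm_nonneg _) (hu.inputNorm_shift_le k)))

end Stability

section SmallGain

variable {A : ∀ i, Set (E i)} {W : ∀ i, E i → ℝ} {ωl ωu : ℝ → ℝ}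

theorem bddAbove_range_of_le_infDist (hA : (setA A).Nonempty) (hωu : ClassK ωu)
    (hW : ∀ i ξi, W i ξi ≤ ωu (Metric.infDist ξi (A i))) {ξ : ∀ i, E i} (hξ : Bdd ξ) :
    BddAbove (range fun i => W i (ξ i)) :=
  ⟨ωu (distA ξ (setA A)), forall_mem_range.2 fun i =>
    (hW i _).trans (hωu.mono Metric.infDist_nonneg (infDist_le_distA_setA hξ hA i))⟩

theorem iSup_sandwich (hA : (setA A).Nonempty) (hωl : ClassK ωl) (hωu : ClassK ωu)
    (hW : ∀ i ξi, ωl (Metric.infDist ξi (A i)) ≤ W i ξi ∧ W i ξi ≤ ωu (Metric.infDist ξi (A i)))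
    {ξ : ∀ i, E i} (hξ : Bdd ξ) :
    ωl (distA ξ (setA A)) ≤ ⨆ i, W i (ξ i) ∧ ⨆ i, W i (ξ i) ≤ ωu (distA ξ (setA A)) := by
  have hbdd := bddAbove_range_of_le_infDist hA hωu (fun i ξi => (hW i ξi).2) hξ
  refine ⟨?_, ciSup_le fun i => (hW i _).2.trans
    (hωu.mono Metric.infDist_nonneg (infDist_le_distA_setA hξ hA i))⟩
  rw [distA_setA_eq_iSup_infDist hξ hA,
    hωl.map_ciSup (fun _ => Metric.infDist_nonneg) (bddAbove_range_infDist hξ hA)]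
  exact ciSup_mono hbdd fun i => (hW i _).1

variable {F : (∀ i, E i) → (∀ i, P i) → ∀ i, E i} {M : ℕ}
  {γij : ℕ → ℕ → ℝ → ℝ} {γiu : ℕ → ℝ → ℝ} {α γu : ℝ → ℝ}

theorem isFiniteStepLyapunov_iSup (hA : (setA A).Nonempty) (hωl : ClassKinf ωl) (hωu : ClassK ωu)
    (hW : ∀ i ξi, ωl (Metric.infDist ξi (A i)) ≤ W i ξi ∧ W i ξi ≤ ωu (Metric.infDist ξi (A i)))
    (hdecay : ∀ ξ, Bdd ξ → ∀ u, AdmInput u → ∀ i, W i (traj F ξ u M i) ≤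
      max (⨆ j, γij i j (W j (ξ j))) (γiu i (inputNorm u)))
    (hα : ClassK α) (hαlt : ∀ s, 0 < s → α s < s) (hγij : ∀ i j s, 0 ≤ s → γij i j s ≤ α s)
    (hγu : ClassK γu) (hγiu : ∀ i s, 0 ≤ s → γiu i s ≤ γu s) :
    IsFiniteStepLyapunov F (setA A) M fun ξ => ⨆ i, W i (ξ i) := by
  refine ⟨ωl, ωu, α, γu, hωl, hωu, hα, hαlt, hγu,
    fun ξ hξ => iSup_sandwich hA hωl.classK hωu hW hξ, fun ξ hξ u hu => ciSup_le fun i => ?_⟩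
  have hW0 : ∀ j, 0 ≤ W j (ξ j) := fun j =>
    (hωl.classK.nonneg Metric.infDist_nonneg).trans (hW j _).1
  have hbdd := bddAbove_range_of_le_infDist hA hωu (fun i ξi => (hW i ξi).2) hξ
  have hgain : ⨆ j, γij i j (W j (ξ j)) ≤ α (⨆ j, W j (ξ j)) := ciSup_le fun j =>
    (hγij i j _ (hW0 j)).trans (hα.mono (hW0 j) (le_ciSup hbdd j))
  exact (hdecay ξ hξ u hu i).trans (max_le_max hgain (hγiu i _ (inputNorm_nonneg u)))

theorem stmt14_general (hF : IsWellPosed F) (hA : (setA A).Nonempty) (hM : 0 < M)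
    (hωl : ClassKinf ωl) (hωu : ClassK ωu)
    (hW : ∀ i ξi, ωl (Metric.infDist ξi (A i)) ≤ W i ξi ∧ W i ξi ≤ ωu (Metric.infDist ξi (A i)))
    (hdecay : ∀ ξ, Bdd ξ → ∀ u, AdmInput u → ∀ i, W i (traj F ξ u M i) ≤
      max (⨆ j, γij i j (W j (ξ j))) (γiu i (inputNorm u)))
    (hα : ClassK α) (hαlt : ∀ s, 0 < s → α s < s) (hγij : ∀ i j s, 0 ≤ s → γij i j s ≤ α s)
    (hγu : ClassK γu) (hγiu : ∀ i s, 0 ≤ s → γiu i s ≤ γu s)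
    (hK : IsKBounded F (setA A)) : IsISS F (setA A) :=
  (isFiniteStepLyapunov_iSup hA hωl hωu hW hdecay hα hαlt hγij hγu hγiu).isISS hM hF hK

end SmallGain

/-- Relaxed small-gain theorem: under the Lyapunov-type and uniformity assumptions
and `K`-boundedness of `f` w.r.t. `A`, the infinite network is ISS w.r.t. `A`. -/
theorem stmt14
    [∀ i, NormedSpace ℝ (E i)] [∀ i, FiniteDimensional ℝ (E i)] [∀ i, Nontrivial (E i)]
    [∀ i, NormedSpace ℝ (P i)] [∀ i, FiniteDimensional ℝ (P i)] [∀ i, Nontrivial (P i)]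
    (hself : ∀ i, i ∉ I i)
    (hloc : ∀ i, {j | i ∈ I j}.Finite)
    (f : ∀ i, E i → ((j : I i) → E j.1) → P i → E i)
    (hf : ∀ i, Continuous fun q : E i × ((j : I i) → E j.1) × P i => f i q.1 q.2.1 q.2.2)
    (hwp : ∀ (x : ∀ i, E i) (u : ∀ i, P i), Bdd x → Bdd u → Bdd (netF I f x u))
    (A : ∀ i, Set (E i)) (hne : ∀ i, (A i).Nonempty) (hcl : ∀ i, IsClosed (A i))
    (hAne : (setA A).Nonempty)
    (M : ℕ) (hM : 0 < M)
    -- Lyapunov-type assumptions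
    (W : ∀ i, E i → ℝ) (hWcont : ∀ i, Continuous (W i)) (hWnn : ∀ i ξi, 0 ≤ W i ξi)
    (ωl ωu : ℕ → ℝ → ℝ) (hωl : ∀ i, ClassKinf (ωl i)) (hωu : ∀ i, ClassKinf (ωu i))
    (hsandwich : ∀ (i : ℕ) (ξi : E i),
      ωl i (Metric.infDist ξi (A i)) ≤ W i ξi ∧ W i ξi ≤ ωu i (Metric.infDist ξi (A i)))
    (γij : ℕ → ℕ → ℝ → ℝ)
    (hγij : ∀ i j, ClassKinf (γij i j) ∨ γij i j = fun _ => 0)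
    (γiu : ℕ → ℝ → ℝ) (hγiu : ∀ i, ClassK (γiu i))
    (hdecay : ∀ (ξ : ∀ i, E i), Bdd ξ → ∀ u : ℕ → ∀ i, P i, AdmInput u →
      ∀ i, W i (traj (netF I f) ξ u M i) ≤
        max (⨆ j, γij i j (W j (ξ j))) (γiu i (inputNorm u)))
    -- Uniformity assumptions
    (ωlb ωub : ℝ → ℝ) (hωlb : ClassKinf ωlb) (hωub : ClassKinf ωub)
    (hunifω : ∀ (i : ℕ) (s : ℝ), 0 ≤ s →
      ωlb s ≤ ωl i s ∧ ωl i s ≤ ωu i s ∧ ωu i s ≤ ωub s)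
    (α : ℝ → ℝ) (hα : ClassKinf α) (hαid : ∀ s : ℝ, 0 < s → α s < s)
    (hunifγ : ∀ (i j : ℕ) (s : ℝ), 0 ≤ s → γij i j s ≤ α s)
    (γu : ℝ → ℝ) (hγu : ClassK γu)
    (hunifγu : ∀ (i : ℕ) (s : ℝ), 0 ≤ s → γiu i s ≤ γu s)
    (hKb : ∃ κ₁ κ₂ : ℝ → ℝ, ClassK κ₁ ∧ ClassK κ₂ ∧
      ∀ (ξ : ∀ i, E i) (μ : ∀ i, P i), Bdd ξ → Bdd μ →
        distA (netF I f ξ μ) (setA A) ≤ κ₁ (distA ξ (setA A)) + κ₂ (supNorm μ))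
    :
    ∃ β γ : _, ClassKL β ∧ ClassK γ ∧
      ∀ (ξ : ∀ i, E i), Bdd ξ → ∀ u : ℕ → ∀ i, P i, AdmInput u →
        ∀ k : ℕ, distA (traj (netF I f) ξ u k) (setA A) ≤
          max (β (distA ξ (setA A)) (k : ℝ)) (γ (inputNorm u)) := by
  have hW : ∀ i ξi, ωlb (Metric.infDist ξi (A i)) ≤ W i ξi ∧
      W i ξi ≤ ωub (Metric.infDist ξi (A i)) := fun i ξi =>
    ⟨(hunifω i _ Metric.infDist_nonneg).1.trans (hsandwich i ξi).1,
      (hsandwich i ξi).2.trans (hunifω i _ Metric.infDist_nonneg).2.2⟩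
  exact stmt14_general hwp hAne hM hωlb hωub.1 hW hdecay hα.1 hαid hunifγ hγu hunifγu hKb

end Network
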